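/- arXiv:2011.02393 — 2 statements merged into one kernel-verified Lean document; each statement's English description precedes it below -/
import Mathlib

section
/- For every integer w ≥ 3, with v = w−1, ∑_{a+b=w, a≥2, b≥1} ζ(ā,b) = ζ(v̄,1̄) + ζ(1̄,v̄) − ζ(v̄,1) − ζ(1̄,v) + ζ(w). -/
open Filter

/-- Depth-1 Euler sum `ζ(s; e) = ∑_{n ≥ 1} eⁿ / nˢ`,
defined as the limit of partial sums. `e = 1` gives `ζ(s)`, `e = -1` gives `ζ(s̄)`. -/
noncomputable def eulerSum1 (s : ℕ) (e : ℝ) : ℝ :=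
  limUnder atTop (fun N : ℕ =>
    ∑ n ∈ Finset.Icc 1 N, e ^ n / (n : ℝ) ^ s)

/-- Depth-2 Euler sum `ζ(s₁, s₂; e₁, e₂) = ∑_{n₁ > n₂ ≥ 1} e₁^{n₁} e₂^{n₂} / (n₁^{s₁} n₂^{s₂})`,
defined as the limit of iterated partial sums. A bar over an argument means the
corresponding sign is `-1`. -/
noncomputable def eulerSum2 (s₁ s₂ : ℕ) (e₁ e₂ : ℝ) : ℝ :=
  limUnder atTop (fun N : ℕ =>
    ∑ n₁ ∈ Finset.Icc 1 N, ∑ n₂ ∈ Finset.Ico 1 n₁,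
      e₁ ^ n₁ * e₂ ^ n₂ / ((n₁ : ℝ) ^ s₁ * (n₂ : ℝ) ^ s₂))

/-- Depth-3 Euler sum
`ζ(s₁, s₂, s₃; e₁, e₂, e₃) = ∑_{n₁ > n₂ > n₃ ≥ 1} e₁^{n₁} e₂^{n₂} e₃^{n₃} / (n₁^{s₁} n₂^{s₂} n₃^{s₃})`. -/
noncomputable def eulerSum3 (s₁ s₂ s₃ : ℕ) (e₁ e₂ e₃ : ℝ) : ℝ :=
  limUnder atTop (fun N : ℕ =>
    ∑ n₁ ∈ Finset.Icc 1 N, ∑ n₂ ∈ Finset.Ico 1 n₁, ∑ n₃ ∈ Finset.Ico 1 n₂,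
      e₁ ^ n₁ * e₂ ^ n₂ * e₃ ^ n₃ / ((n₁ : ℝ) ^ s₁ * (n₂ : ℝ) ^ s₂ * (n₃ : ℝ) ^ s₃))

/-- Depth-1 multiple T-value `T(s) = 2 ∑_{m odd, m ≥ 1} 1 / mˢ`. -/
noncomputable def tValue1 (s : ℕ) : ℝ :=
  limUnder atTop (fun N : ℕ =>
    ∑ m ∈ Finset.Icc 1 N, if m % 2 = 1 then 2 / (m : ℝ) ^ s else 0)

/-- Depth-2 multiple T-value
`T(s₁, s₂) = ∑_{m₁ > m₂ > 0, m₁ even, m₂ odd} 4 / (m₁^{s₁} m₂^{s₂})`. -/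
noncomputable def tValue2 (s₁ s₂ : ℕ) : ℝ :=
  limUnder atTop (fun N : ℕ =>
    ∑ m₁ ∈ Finset.Icc 1 N, ∑ m₂ ∈ Finset.Ico 1 m₁,
      if m₁ % 2 = 0 ∧ m₂ % 2 = 1 then 4 / ((m₁ : ℝ) ^ s₁ * (m₂ : ℝ) ^ s₂) else 0)

/-- Depth-3 multiple T-value
`T(s₁, s₂, s₃) = ∑_{m₁ > m₂ > m₃ > 0, m₁ odd, m₂ even, m₃ odd} 8 / (m₁^{s₁} m₂^{s₂} m₃^{s₃})`. -/
noncomputable def tValue3 (s₁ s₂ s₃ : ℕ) : ℝ :=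
  limUnder atTop (fun N : ℕ =>
    ∑ m₁ ∈ Finset.Icc 1 N, ∑ m₂ ∈ Finset.Ico 1 m₁, ∑ m₃ ∈ Finset.Ico 1 m₂,
      if m₁ % 2 = 1 ∧ m₂ % 2 = 0 ∧ m₃ % 2 = 1 then
        8 / ((m₁ : ℝ) ^ s₁ * (m₂ : ℝ) ^ s₂ * (m₃ : ℝ) ^ s₃) else 0)

/-!
Summing the partial fraction expansion
`∑_{a+b=v+1, a,b≥1} n⁻ᵃ m⁻ᵇ = (m⁻ᵛ - n⁻ᵛ) / (n - m)` against `eⁿ fᵐ` over `n > m ≥ 1` and putting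
`k = n - m` gives `∑_{a+b=v+1} ζ(a,b;e,f) = ζ(v;ef) ζ(1;e) - ζ(v,1;ef,f⁻¹)`, where the product
arises as a Cauchy product, to which Mertens' theorem applies because its first factor converges
absolutely. Expanding `ζ(v;ef) ζ(1;e)` by the stuffle product instead, and moving the term
`a = 1` to the other side, gives an identity which for `(e, f) = (-1, 1)` is the theorem.
-/

open Topology

section PartialSums

variable {R : Type*}

/-- The partial sum `∑_{1 ≤ n ≤ N} a n` of a series; like the Euler sums, it starts at `n = 1`. -/
def partialSum [AddCommMonoid R] (a : ℕ → R) (N : ℕ) : R :=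
  ∑ n ∈ Finset.Icc 1 N, a n

/-- The truncated double series `∑_{N ≥ n > m ≥ 1} a n * b m`, whose limit is a depth-2 Euler sum.
As there, the first sequence carries the larger index. -/
def nestedSum [NonUnitalNonAssocSemiring R] (a b : ℕ → R) : ℕ → R :=
  partialSum fun n => ∑ m ∈ Finset.Ico 1 n, a n * b m

/-- The partial sum `∑_{m, k ≥ 1, m + k ≤ N} a m * b k` of the Cauchy product of two series that
start at `1`. -/
def cauchySum [NonUnitalNonAssocSemiring R] (a b : ℕ → R) : ℕ → R :=
  partialSum fun n => ∑ m ∈ Finset.Ico 1 n, a m * b (n - m)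

theorem partialSum_eq_sum_range [AddCommMonoid R] (a : ℕ → R) (N : ℕ) :
    partialSum a N = ∑ n ∈ Finset.range N, a (n + 1) := by
  simp only [add_comm _ 1]
  exact Finset.sum_Ico_eq_sum_range a 1 (N + 1)

theorem partialSum_succ [AddCommMonoid R] (a : ℕ → R) (N : ℕ) :
    partialSum a (N + 1) = partialSum a N + a (N + 1) :=
  Finset.sum_Icc_succ_top (Nat.le_add_left 1 N) a

theorem nestedSum_succ [NonUnitalNonAssocSemiring R] (a b : ℕ → R) (N : ℕ) :
    nestedSum a b (N + 1) = nestedSum a b N + a (N + 1) * partialSum b N := by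
  rw [nestedSum, partialSum_succ, ← Finset.mul_sum]
  rfl

theorem partialSum_mul_partialSum [NonUnitalNonAssocCommSemiring R] (a b : ℕ → R) (N : ℕ) :
    partialSum a N * partialSum b N
      = nestedSum a b N + nestedSum b a N + partialSum (fun n => a n * b n) N := by
  induction N with
  | zero => simp [partialSum, nestedSum]
  | succ N ih =>
    simp only [partialSum_succ, nestedSum_succ, add_mul, mul_add, ih,
      mul_comm (partialSum a N) (b (N + 1))]
    abel

theorem nestedSum_reflect [NonUnitalNonAssocSemiring R] (a b : ℕ → R) :
    nestedSum a b = partialSum fun n => ∑ m ∈ Finset.Ico 1 n, a n * b (n - m) := by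
  refine congrArg partialSum (funext fun n => ?_)
  rw [Finset.sum_Ico_reflect (fun m => a n * b m) 1 n.le_succ, Nat.add_sub_cancel_left,
    Nat.add_sub_cancel]

theorem cauchySum_eq_partialSum [NonUnitalNonAssocSemiring R] (a b : ℕ → R) (N : ℕ) :
    cauchySum a b N = partialSum (fun m => a m * partialSum b (N - m)) N := by
  refine (Finset.sum_Ico_Ico_comm' 1 (N + 1) fun m n => a m * b (n - m)).symm.trans
    (Finset.sum_congr rfl fun m hm => ?_)
  have hN : N + 1 = N - m + 1 + m := by
    have := (Finset.mem_Ico.mp hm).2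
    omega
  rw [← Finset.mul_sum, hN, add_comm m 1, Finset.sum_Ico_add_right_sub_eq (f := b)]
  rfl

theorem tendsto_partialSum_of_summable [AddCommGroup R] [TopologicalSpace R]
    [IsTopologicalAddGroup R] {a : ℕ → R} (ha : Summable a) :
    Tendsto (partialSum a) atTop (𝓝 (∑' n, a (n + 1))) := by
  rw [funext (partialSum_eq_sum_range a)]
  exact ((summable_nat_add_iff 1).mpr ha).hasSum.tendsto_sum_nat

theorem tendsto_partialSum_mul_zero [NonUnitalNormedRing R] {a : ℕ → R}
    (ha : Summable fun n => ‖a n‖) {F : ℕ → ℕ → R} {K : ℝ} (hK : ∀ N n, ‖F N n‖ ≤ K)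
    (hF : ∀ n, Tendsto (fun N => F N n) atTop (𝓝 0)) :
    Tendsto (fun N => partialSum (fun n => a n * F N n) N) atTop (𝓝 0) := by
  have hbound : Tendsto (fun N => ∑' n, ‖a n‖ * ‖F N n‖) atTop (𝓝 (∑' _ : ℕ, (0 : ℝ))) := by
    refine tendsto_tsum_of_dominated_convergence (ha.mul_right K)
      (fun n => by simpa using (hF n).norm.const_mul ‖a n‖)
      (Eventually.of_forall fun N n => ?_)
    rw [norm_mul, norm_norm, norm_norm]
    gcongr
    exact hK N n
  rw [tsum_zero] at hbound
  refine squeeze_zero_norm (fun N => ?_) hbound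
  have hsum : Summable fun n => ‖a n‖ * ‖F N n‖ :=
    (ha.mul_right K).of_nonneg_of_le (fun n => by positivity) fun n => by
      gcongr
      exact hK N n
  calc ‖partialSum (fun n => a n * F N n) N‖
      ≤ ∑ n ∈ Finset.Icc 1 N, ‖a n‖ * ‖F N n‖ :=
        norm_sum_le_of_le _ fun n _ => norm_mul_le _ _
    _ ≤ ∑' n, ‖a n‖ * ‖F N n‖ := hsum.sum_le_tsum _ fun n _ => by positivity

theorem tendsto_cauchySum [NonUnitalNormedRing R] {a b : ℕ → R} {k l : R}
    (ha : Summable fun n => ‖a n‖) (hak : Tendsto (partialSum a) atTop (𝓝 k))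
    (hbl : Tendsto (partialSum b) atTop (𝓝 l)) :
    Tendsto (cauchySum a b) atTop (𝓝 (k * l)) := by
  obtain ⟨K, hK⟩ := hbl.norm.bddAbove_range
  have herror : Tendsto (fun N => partialSum (fun m => a m * (partialSum b (N - m) - l)) N)
      atTop (𝓝 0) :=
    tendsto_partialSum_mul_zero ha
      (fun N m => (norm_sub_le _ _).trans (add_le_add_left (hK ⟨N - m, rfl⟩) ‖l‖))
      fun m => tendsto_sub_nhds_zero_iff.mpr (hbl.comp (tendsto_sub_atTop_nat m))
  have hsplit : ∀ N, partialSum (fun m => a m * (partialSum b (N - m) - l)) N + partialSum a N * l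
      = cauchySum a b N := fun N => by
    simp only [cauchySum_eq_partialSum, partialSum, mul_sub, Finset.sum_sub_distrib,
      Finset.sum_mul, sub_add_cancel]
  simpa only [hsplit, zero_add] using herror.add (hak.mul_const l)

end PartialSums

theorem norm_geom_sum_le_two_div {K : Type*} [NormedField K] {x : K} (hx : ‖x‖ ≤ 1) (hx1 : x ≠ 1)
    (n : ℕ) : ‖∑ i ∈ Finset.range n, x ^ i‖ ≤ 2 / ‖x - 1‖ := by
  rw [geom_sum_eq hx1, norm_div]
  gcongr
  calc ‖x ^ n - 1‖ ≤ ‖x‖ ^ n + ‖(1 : K)‖ := by simpa only [norm_pow] using norm_sub_le (x ^ n) 1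
    _ ≤ 1 + 1 := add_le_add (pow_le_one₀ (norm_nonneg x) hx) norm_one.le
    _ = 2 := one_add_one_eq_two

theorem abs_pow_mul_pow_le_one {R : Type*} [CommRing R] [LinearOrder R] [IsStrictOrderedRing R]
    {e f : R} (he : |e| ≤ 1) (hef : |e * f| ≤ 1) {m n : ℕ} (hmn : m ≤ n) :
    |e ^ n * f ^ m| ≤ 1 := by
  obtain ⟨k, rfl⟩ := Nat.exists_eq_add_of_le hmn
  calc |e ^ (m + k) * f ^ m| = |e * f| ^ m * |e| ^ k := by
        rw [← abs_pow, ← abs_pow, ← abs_mul]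
        ring_nf
    _ ≤ 1 := mul_le_one₀ (pow_le_one₀ (abs_nonneg _) hef) (by positivity)
        (pow_le_one₀ (abs_nonneg _) he)

/- Balancing the exponents `2` and `1` dominates the double series `∑ 1 / (n² m)` over `n ≥ m` by
the square of a convergent series. -/
theorem rpow_three_halves_mul_rpow_three_halves_le {x y : ℝ} (hx : 0 < x) (hxy : x ≤ y) :
    y ^ (3 / 2 : ℝ) * x ^ (3 / 2 : ℝ) ≤ y ^ 2 * x := by
  have hsplit : ∀ z : ℝ, 0 < z → z ^ (3 / 2 : ℝ) = z * √z := fun z hz => by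
    rw [Real.sqrt_eq_rpow, ← Real.rpow_one_add' hz.le (by norm_num)]
    norm_num
  have hy : 0 < y := hx.trans_le hxy
  calc y ^ (3 / 2 : ℝ) * x ^ (3 / 2 : ℝ) = y * √y * (x * √x) := by rw [hsplit y hy, hsplit x hx]
    _ ≤ y * √y * (x * √y) := by gcongr
    _ = y ^ 2 * x := by linear_combination y * x * Real.mul_self_sqrt hy.le

theorem sum_one_div_pow_mul_pow {K : Type*} [Field K] {x y : K} (hx : x ≠ 0) (hy : y ≠ 0)
    (hxy : x ≠ y) (v : ℕ) :
    ∑ a ∈ Finset.Icc 1 v, 1 / (x ^ a * y ^ (v + 1 - a)) = (1 / y ^ v - 1 / x ^ v) / (x - y) := by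
  have hgeom : ∑ a ∈ Finset.Icc 1 v, 1 / (x ^ a * y ^ (v + 1 - a))
      = x⁻¹ * y⁻¹ * ∑ i ∈ Finset.range v, x⁻¹ ^ i * y⁻¹ ^ (v - 1 - i) := by
    rw [← partialSum, partialSum_eq_sum_range, Finset.mul_sum]
    refine Finset.sum_congr rfl fun i hi => ?_
    have hexp : v + 1 - (i + 1) = v - 1 - i + 1 := by
      have := Finset.mem_range.mp hi
      omega
    rw [hexp, one_div, mul_inv, ← inv_pow, ← inv_pow]
    ring
  have hsub : x⁻¹ * y⁻¹ * (x - y) = y⁻¹ - x⁻¹ := by field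
  rw [hgeom, eq_div_iff (sub_ne_zero.mpr hxy), mul_right_comm, hsub, one_div, one_div, ← inv_pow,
    ← inv_pow]
  linear_combination -Commute.geom_sum₂_mul (Commute.all x⁻¹ y⁻¹) v

section Convergence

variable {s t : ℕ} {e f : ℝ}

/-- The general term `eⁿ / nˢ` of a depth-1 Euler sum. -/
noncomputable def eulerTerm (s : ℕ) (e : ℝ) (n : ℕ) : ℝ :=
  e ^ n / (n : ℝ) ^ s

theorem eulerTerm_mul_eulerTerm (s t : ℕ) (e f : ℝ) (n : ℕ) :
    eulerTerm s e n * eulerTerm t f n = eulerTerm (s + t) (e * f) n := by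
  simp only [eulerTerm, div_mul_div_comm, mul_pow, pow_add]

theorem eulerSum2_eq_limUnder (s t : ℕ) (e f : ℝ) :
    eulerSum2 s t e f = limUnder atTop (nestedSum (eulerTerm s e) (eulerTerm t f)) := by
  simp only [eulerSum2, nestedSum, eulerTerm, div_mul_div_comm]
  rfl

theorem summable_norm_eulerTerm (hs : 2 ≤ s) (he : |e| ≤ 1) :
    Summable fun n => ‖eulerTerm s e n‖ := by
  refine (Real.summable_one_div_nat_pow.mpr hs).of_nonneg_of_le (fun n => norm_nonneg _)
    fun n => ?_
  rw [eulerTerm, norm_div, norm_pow, norm_pow, Real.norm_natCast]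
  gcongr
  exact pow_le_one₀ (norm_nonneg e) he

theorem tendsto_eulerSum1 (hs : 2 ≤ s) (he : |e| ≤ 1) :
    Tendsto (partialSum (eulerTerm s e)) atTop (𝓝 (eulerSum1 s e)) :=
  tendsto_nhds_limUnder
    ⟨_, tendsto_partialSum_of_summable (summable_norm_eulerTerm hs he).of_norm⟩

theorem tendsto_eulerSum1_one (he : |e| ≤ 1) (he1 : e ≠ 1) :
    Tendsto (partialSum (eulerTerm 1 e)) atTop (𝓝 (eulerSum1 1 e)) := by
  refine tendsto_nhds_limUnder (cauchySeq_tendsto_of_complete ?_)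
  have hanti : Antitone fun n : ℕ => 1 / ((n : ℝ) + 1) := fun m n hmn =>
    one_div_le_one_div_of_le (by positivity) (by gcongr)
  have hbound : ∀ n, ‖∑ i ∈ Finset.range n, e ^ (i + 1)‖ ≤ 2 / ‖e - 1‖ := fun n => by
    simp only [pow_succ, ← Finset.sum_mul, norm_mul]
    exact (mul_le_of_le_one_right (norm_nonneg _) he).trans (norm_geom_sum_le_two_div he he1 n)
  convert! hanti.cauchySeq_series_mul_of_tendsto_zero_of_bounded
    tendsto_one_div_add_atTop_nhds_zero_nat hbound using 2 with N
  simp [partialSum_eq_sum_range, eulerTerm, div_eq_inv_mul]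

theorem abs_eulerTerm_mul_eulerTerm_le {m n : ℕ} (hs : 2 ≤ s) (ht : 1 ≤ t) (he : |e| ≤ 1)
    (hef : |e * f| ≤ 1) (hm : 1 ≤ m) (hmn : m ≤ n) :
    |eulerTerm s e n * eulerTerm t f m|
      ≤ 1 / (n : ℝ) ^ (3 / 2 : ℝ) * (1 / (m : ℝ) ^ (3 / 2 : ℝ)) := by
  have hm1 : (1 : ℝ) ≤ m := by exact_mod_cast hm
  have hmn' : (m : ℝ) ≤ n := by exact_mod_cast hmn
  have hn1 : (1 : ℝ) ≤ n := hm1.trans hmn'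
  have hden : (n : ℝ) ^ (3 / 2 : ℝ) * (m : ℝ) ^ (3 / 2 : ℝ) ≤ (n : ℝ) ^ s * (m : ℝ) ^ t :=
    (rpow_three_halves_mul_rpow_three_halves_le (by positivity) hmn').trans
      (mul_le_mul (pow_le_pow_right₀ hn1 hs) (le_self_pow₀ hm1 (by omega)) (by positivity)
        (by positivity))
  rw [eulerTerm, eulerTerm, div_mul_div_comm, one_div_mul_one_div, abs_div,
    abs_of_nonneg (by positivity : (0 : ℝ) ≤ (n : ℝ) ^ s * (m : ℝ) ^ t)]
  exact div_le_div₀ zero_le_one (abs_pow_mul_pow_le_one he hef hmn) (by positivity) hden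

theorem tendsto_eulerSum2 (hs : 2 ≤ s) (ht : 1 ≤ t) (he : |e| ≤ 1) (hef : |e * f| ≤ 1) :
    Tendsto (nestedSum (eulerTerm s e) (eulerTerm t f)) atTop (𝓝 (eulerSum2 s t e f)) := by
  rw [eulerSum2_eq_limUnder]
  refine tendsto_nhds_limUnder ⟨_, tendsto_partialSum_of_summable ?_⟩
  have hsum : Summable fun n : ℕ => 1 / (n : ℝ) ^ (3 / 2 : ℝ) :=
    Real.summable_one_div_nat_rpow.mpr (by norm_num)
  refine (hsum.mul_right (∑' m : ℕ, 1 / (m : ℝ) ^ (3 / 2 : ℝ))).of_norm_bounded fun n => ?_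
  calc ‖∑ m ∈ Finset.Ico 1 n, eulerTerm s e n * eulerTerm t f m‖
      ≤ ∑ m ∈ Finset.Ico 1 n, 1 / (n : ℝ) ^ (3 / 2 : ℝ) * (1 / (m : ℝ) ^ (3 / 2 : ℝ)) :=
        norm_sum_le_of_le _ fun m hm =>
          have ⟨hm1, hmn⟩ := Finset.mem_Ico.mp hm
          abs_eulerTerm_mul_eulerTerm_le hs ht he hef hm1 hmn.le
    _ ≤ 1 / (n : ℝ) ^ (3 / 2 : ℝ) * ∑' m : ℕ, 1 / (m : ℝ) ^ (3 / 2 : ℝ) := by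
        rw [← Finset.mul_sum]
        gcongr
        exact hsum.sum_le_tsum _ fun m _ => by positivity

/- `ζ(1, t; e, f)` need not converge absolutely; the stuffle product expresses its truncations
through those of sums already known to converge. -/
theorem tendsto_nestedSum_eulerTerm_one_left (ht : 2 ≤ t) (he : |e| ≤ 1) (he1 : e ≠ 1)
    (hf : |f| ≤ 1) :
    Tendsto (nestedSum (eulerTerm 1 e) (eulerTerm t f)) atTop
      (𝓝 (eulerSum1 t f * eulerSum1 1 e - eulerSum2 t 1 f e - eulerSum1 (t + 1) (f * e))) := by
  have hfe : |f * e| ≤ 1 := (abs_mul f e).trans_le (mul_le_one₀ hf (abs_nonneg e) he)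
  refine ((((tendsto_eulerSum1 ht hf).mul (tendsto_eulerSum1_one he he1)).sub
    (tendsto_eulerSum2 ht le_rfl hf hfe)).sub
      (tendsto_eulerSum1 (Nat.le_succ_of_le ht) hfe)).congr fun N => ?_
  simp only [partialSum_mul_partialSum, eulerTerm_mul_eulerTerm]
  ring

theorem tendsto_eulerSum2_one_left (ht : 2 ≤ t) (he : |e| ≤ 1) (he1 : e ≠ 1) (hf : |f| ≤ 1) :
    Tendsto (nestedSum (eulerTerm 1 e) (eulerTerm t f)) atTop (𝓝 (eulerSum2 1 t e f)) := by
  rw [eulerSum2_eq_limUnder]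
  exact tendsto_nhds_limUnder ⟨_, tendsto_nestedSum_eulerTerm_one_left ht he he1 hf⟩

theorem eulerSum1_mul_eulerSum1_one (ht : 2 ≤ t) (he : |e| ≤ 1) (he1 : e ≠ 1) (hf : |f| ≤ 1) :
    eulerSum1 t f * eulerSum1 1 e
      = eulerSum2 t 1 f e + eulerSum2 1 t e f + eulerSum1 (t + 1) (f * e) := by
  have huniq := tendsto_nhds_unique (tendsto_eulerSum2_one_left ht he he1 hf)
    (tendsto_nestedSum_eulerTerm_one_left ht he he1 hf)
  linear_combination -huniq

end Convergence

theorem sum_eulerTerm_mul_eulerTerm (v : ℕ) (e : ℝ) {f : ℝ} (hf : f ≠ 0) {m n : ℕ}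
    (hm : 1 ≤ m) (hmn : m < n) :
    ∑ a ∈ Finset.Icc 1 v, eulerTerm a e n * eulerTerm (v + 1 - a) f m
      = eulerTerm v (e * f) m * eulerTerm 1 e (n - m)
        - eulerTerm v (e * f) n * eulerTerm 1 f⁻¹ (n - m) := by
  obtain ⟨k, rfl⟩ := Nat.exists_eq_add_of_le hmn.le
  have hpf := sum_one_div_pow_mul_pow (x := ((m + k : ℕ) : ℝ)) (y := m) (by positivity)
    (by positivity) (by exact_mod_cast hmn.ne') v
  calc ∑ a ∈ Finset.Icc 1 v, eulerTerm a e (m + k) * eulerTerm (v + 1 - a) f m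
      = e ^ (m + k) * f ^ m
          * ∑ a ∈ Finset.Icc 1 v, 1 / (((m + k : ℕ) : ℝ) ^ a * (m : ℝ) ^ (v + 1 - a)) := by
        simp only [eulerTerm, Finset.mul_sum, div_mul_div_comm, mul_one_div]
    _ = (e * f) ^ m * e ^ k / ((m : ℝ) ^ v * k)
          - (e * f) ^ (m + k) * f⁻¹ ^ k / (((m + k : ℕ) : ℝ) ^ v * k) := by
        have hdiff : ((m + k : ℕ) : ℝ) - m = k := by
          push_cast
          ring
        have hinv : f ^ k * f⁻¹ ^ k = 1 := by rw [← mul_pow, mul_inv_cancel₀ hf, one_pow]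
        have hpow : (e * f) ^ (m + k) * f⁻¹ ^ k = e ^ (m + k) * f ^ m := by
          rw [mul_pow, pow_add f]
          linear_combination e ^ (m + k) * f ^ m * hinv
        rw [hpf, hdiff, hpow]
        field_simp
        ring
    _ = _ := by simp only [eulerTerm, div_mul_div_comm, Nat.add_sub_cancel_left, pow_one]

theorem sum_nestedSum_eulerTerm (v : ℕ) (e : ℝ) {f : ℝ} (hf : f ≠ 0) (N : ℕ) :
    ∑ a ∈ Finset.Icc 1 v, nestedSum (eulerTerm a e) (eulerTerm (v + 1 - a) f) N
      = cauchySum (eulerTerm v (e * f)) (eulerTerm 1 e) N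
        - nestedSum (eulerTerm v (e * f)) (eulerTerm 1 f⁻¹) N := by
  rw [nestedSum_reflect (eulerTerm v (e * f))]
  simp only [nestedSum, cauchySum, partialSum, ← Finset.sum_sub_distrib]
  rw [Finset.sum_comm]
  refine Finset.sum_congr rfl fun n _ => ?_
  rw [Finset.sum_comm]
  refine Finset.sum_congr rfl fun m hm => ?_
  obtain ⟨hm1, hmn⟩ := Finset.mem_Ico.mp hm
  exact sum_eulerTerm_mul_eulerTerm v e hf hm1 hmn

theorem sum_eulerSum2 {v : ℕ} (hv : 2 ≤ v) {e f : ℝ} (he : |e| ≤ 1) (he1 : e ≠ 1)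
    (hf : |f| ≤ 1) (hf0 : f ≠ 0) :
    ∑ a ∈ Finset.Icc 1 v, eulerSum2 a (v + 1 - a) e f
      = eulerSum1 v (e * f) * eulerSum1 1 e - eulerSum2 v 1 (e * f) f⁻¹ := by
  have hef : |e * f| ≤ 1 := (abs_mul e f).trans_le (mul_le_one₀ he (abs_nonneg f) hf)
  have hterm : ∀ a ∈ Finset.Icc 1 v,
      Tendsto (nestedSum (eulerTerm a e) (eulerTerm (v + 1 - a) f)) atTop
        (𝓝 (eulerSum2 a (v + 1 - a) e f)) := fun a ha => by
    obtain ⟨ha1, hav⟩ := Finset.mem_Icc.mp ha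
    obtain rfl | ha2 := ha1.eq_or_lt
    · exact tendsto_eulerSum2_one_left hv he he1 hf
    · exact tendsto_eulerSum2 ha2 (by omega) he hef
  refine tendsto_nhds_unique
    ((tendsto_finsetSum _ hterm).congr fun N => sum_nestedSum_eulerTerm v e hf0 N) ?_
  exact (tendsto_cauchySum (summable_norm_eulerTerm hv hef) (tendsto_eulerSum1 hv hef)
    (tendsto_eulerSum1_one he he1)).sub
      (tendsto_eulerSum2 hv le_rfl hef (by rwa [mul_inv_cancel_right₀ hf0]))

theorem sum_zeta_bar_unbar_general {w : ℕ} (hw : 3 ≤ w) {e f : ℝ} (he : |e| ≤ 1) (he1 : e ≠ 1)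
    (hf : |f| ≤ 1) (hf0 : f ≠ 0) :
    ∑ a ∈ Finset.Icc 2 (w - 1), eulerSum2 a (w - a) e f
      = eulerSum2 (w - 1) 1 (e * f) e + eulerSum2 1 (w - 1) e (e * f)
        - eulerSum2 (w - 1) 1 (e * f) f⁻¹ - eulerSum2 1 (w - 1) e f
        + eulerSum1 w (e ^ 2 * f) := by
  obtain ⟨v, rfl⟩ : ∃ v, w = v + 1 := ⟨w - 1, by omega⟩
  have hv : 2 ≤ v := by omega
  have hef : |e * f| ≤ 1 := (abs_mul e f).trans_le (mul_le_one₀ he (abs_nonneg f) hf)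
  have hsum := sum_eulerSum2 hv he he1 hf hf0
  rw [← Finset.add_sum_Ioc_eq_sum_Icc (by omega : 1 ≤ v), ← Finset.Icc_add_one_left_eq_Ioc,
    eulerSum1_mul_eulerSum1_one hv he he1 hef] at hsum
  simp only [Nat.add_sub_cancel] at hsum ⊢
  rw [show e ^ 2 * f = e * f * e by ring]
  linear_combination hsum

/-- For `w ≥ 3`, with `v = w − 1`:
`∑_{a+b=w, a≥2} ζ(ā,b) = ζ(v̄,1̄) + ζ(1̄,v̄) − ζ(v̄,1) − ζ(1̄,v) + ζ(w)`. -/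
theorem sum_zeta_bar_unbar (w : ℕ) (hw : 3 ≤ w) :
    ∑ a ∈ Finset.Icc 2 (w - 1), eulerSum2 a (w - a) (-1) 1
      = eulerSum2 (w - 1) 1 (-1) (-1) + eulerSum2 1 (w - 1) (-1) (-1)
        - eulerSum2 (w - 1) 1 (-1) 1 - eulerSum2 1 (w - 1) (-1) 1 + eulerSum1 w 1 := by
  simpa using sum_zeta_bar_unbar_general hw (e := -1) (f := 1) (by simp) (by norm_num) (by simp)
    one_ne_zero
end

section
/- For every integer w ≥ 3, ∑_{a+b=w, a≥2, b≥1} 2^{a−1} T(a,b) = (w−1)·( ζ(w) − ζ(w̄) ) = (w−1)·T(w). -/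
open Filter

/-!
Write an even `m₁` as `2k` and an odd `m₂ < m₁` as `n`. Then `2 ^ (a - 1) T(a, b)` is the sum of
`2 / (kᵃ nᵇ)` over the pairs with `n < 2k`, which are exactly `k = i + j + 1`, `n = 2j + 1` for
`(i, j) ∈ ℕ × ℕ`. For `w = p + 2` and `n ≠ k` the sum over `a` is geometric:
`∑ₐ 1 / (kᵃ nʷ⁻ᵃ) = 1 / (nᵖ k (k - n)) - 1 / (kᵖ⁺¹ (k - n))`.
As `k - n = i - j`, the last term is odd under `(i, j) ↦ (j, i)` and contributes nothing. In the
first one, `1 / (k (k - n)) = (1 / (i - j) - 1 / (i + n - j)) / n` telescopes in `i` with step `n`.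
With `1 / 0 = 0` the sum of the differences is `∑_{i < n} 1 / (i - j) = 0` by symmetry about `j`;
leaving out the difference `-1 / n` at the excluded `i = j` gives `1 / n ^ 2`, so that this term
contributes `T(w)`. The diagonal `n = k` contributes `(w - 2) T(w)`.
-/

open Topology

section Series

variable {M : Type*} [AddCommMonoid M] [TopologicalSpace M]

lemma tendsto_sum_Icc_one_of_hasSum {f : ℕ → M} {s : M} (h : HasSum f s) (h0 : f 0 = 0) :
    Tendsto (fun N : ℕ => ∑ n ∈ Finset.Icc 1 N, f n) atTop (𝓝 s) := by
  refine ((tendsto_add_atTop_iff_nat 1).2 h.tendsto_sum_nat).congr fun N => ?_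
  rw [Finset.range_eq_Ico, Finset.sum_eq_sum_Ico_succ_bot N.succ_pos, h0, zero_add]
  rfl

lemma tendsto_sum_Icc_sum_Ico_of_hasSum [ContinuousAdd M] [RegularSpace M] {f : ℕ × ℕ → M} {s : M}
    (h : HasSum (fun q : ℕ × ℕ => if 1 ≤ q.2 ∧ q.2 < q.1 then f q else 0) s) :
    Tendsto (fun N : ℕ => ∑ m ∈ Finset.Icc 1 N, ∑ n ∈ Finset.Ico 1 m, f (m, n)) atTop (𝓝 s) := by
  refine tendsto_sum_Icc_one_of_hasSum (h.prod_fiberwise fun m => ?_) (by simp)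
  rw [Finset.sum_congr rfl fun n hn => (if_pos (Finset.mem_Ico.1 hn)).symm]
  exact hasSum_sum_of_ne_finset_zero fun n hn => if_neg (mt Finset.mem_Ico.2 hn)

lemma tendsto_sum_Icc_sum_Ico_even_odd [ContinuousAdd M] [RegularSpace M] {f : ℕ → ℕ → M} {s : M}
    (h : HasSum (fun q : ℕ × ℕ => f (2 * (q.1 + q.2 + 1)) (2 * q.2 + 1)) s) :
    Tendsto (fun N : ℕ => ∑ m ∈ Finset.Icc 1 N, ∑ n ∈ Finset.Ico 1 m,
      if m % 2 = 0 ∧ n % 2 = 1 then f m n else 0) atTop (𝓝 s) := by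
  set e : ℕ × ℕ → ℕ × ℕ := fun q => (2 * (q.1 + q.2 + 1), 2 * q.2 + 1) with he
  have hinj : Function.Injective e := by
    rintro ⟨i, j⟩ ⟨i', j'⟩ h
    simp only [he, Prod.mk.injEq] at h ⊢
    omega
  refine tendsto_sum_Icc_sum_Ico_of_hasSum (f := fun q => if q.1 % 2 = 0 ∧ q.2 % 2 = 1 then
    f q.1 q.2 else 0) ((hinj.hasSum_iff ?_).1 (h.congr_fun ?_))
  · rintro ⟨m, n⟩ hmn
    split_ifs with hlt hpar
    · refine absurd ⟨(m / 2 - n / 2 - 1, n / 2), ?_⟩ hmn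
      simp only [he, Prod.mk.injEq]
      omega
    · rfl
    · rfl
  · rintro ⟨i, j⟩
    simp only [Function.comp_apply, he]
    rw [if_pos (by omega), if_pos (by omega)]

lemma hasSum_ite_fst_eq_snd {ι : Type*} [DecidableEq ι] {f : ι → M} {s : M} (h : HasSum f s) :
    HasSum (fun q : ι × ι => if q.1 = q.2 then f q.2 else 0) s := by
  have hdiag : Function.Injective (fun i : ι => (i, i)) := fun _ _ hij => congrArg Prod.fst hij
  refine (hdiag.hasSum_iff ?_).1 (by simpa [Function.comp_def] using h)
  rintro ⟨i, j⟩ hij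
  exact if_neg fun (hEq : i = j) => hij ⟨i, by rw [hEq]⟩

lemma tsum_eq_zero_of_comp_equiv_eq_neg {ι E : Type*} [AddCommGroup E] [IsAddTorsionFree E]
    [TopologicalSpace E] [IsTopologicalAddGroup E] [T2Space E] {f : ι → E} (e : ι ≃ ι)
    (h : ∀ i, f (e i) = -f i) : ∑' i, f i = 0 := by
  rw [← self_eq_neg, ← tsum_neg, ← e.tsum_eq]
  exact tsum_congr h

lemma tendsto_sum_range_sub_shift {E : Type*} [AddCommGroup E] [TopologicalSpace E]
    [IsTopologicalAddGroup E] {v : ℕ → E} {l : E} (hv : Tendsto v atTop (𝓝 l)) (n : ℕ) :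
    Tendsto (fun N : ℕ => ∑ i ∈ Finset.range N, (v i - v (i + n))) atTop
      (𝓝 (∑ i ∈ Finset.range n, v i - n • l)) := by
  have hshift : ∀ N : ℕ, ∑ i ∈ Finset.range N, (v i - v (i + n))
      = ∑ i ∈ Finset.range n, v i - ∑ i ∈ Finset.range n, v (N + i) := by
    intro N
    rw [Finset.sum_sub_distrib, sub_eq_sub_iff_add_eq_add, ← Finset.sum_range_add, add_comm N n,
      Finset.sum_range_add]
    simp only [add_comm n]
  have hlim : Tendsto (fun N : ℕ => ∑ i ∈ Finset.range n, v (N + i)) atTop (𝓝 (n • l)) := by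
    simpa using tendsto_finsetSum (Finset.range n) fun i _ => (tendsto_add_atTop_iff_nat i).2 hv
  simpa only [hshift] using hlim.const_sub _

end Series

section SingleSums

lemma hasSum_eulerSum1 {w : ℕ} (hw : 2 ≤ w) {e : ℝ} (he : |e| ≤ 1) :
    HasSum (fun n : ℕ => e ^ n / (n : ℝ) ^ w) (eulerSum1 w e) := by
  have hs : Summable (fun n : ℕ => e ^ n / (n : ℝ) ^ w) := by
    refine Summable.of_norm_bounded (Real.summable_one_div_nat_pow.2 hw) fun n => ?_
    rw [norm_div, norm_pow, norm_pow, RCLike.norm_natCast]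
    gcongr
    exact pow_le_one₀ (norm_nonneg e) he
  have h0 : e ^ 0 / ((0 : ℕ) : ℝ) ^ w = 0 := by simp [show w ≠ 0 by omega]
  rw [eulerSum1, (tendsto_sum_Icc_one_of_hasSum hs.hasSum h0).limUnder_eq]
  exact hs.hasSum

lemma one_pow_div_sub_neg_one_pow_div (w n : ℕ) :
    (1 : ℝ) ^ n / (n : ℝ) ^ w - (-1) ^ n / (n : ℝ) ^ w
      = if n % 2 = 1 then 2 / (n : ℝ) ^ w else 0 := by
  rcases Nat.even_or_odd n with h | h
  · simp [h.neg_one_pow, Nat.even_iff.1 h]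
  · rw [h.neg_one_pow, if_pos (Nat.odd_iff.1 h)]
    ring

lemma hasSum_eulerSum1_sub {w : ℕ} (hw : 2 ≤ w) :
    HasSum (fun n : ℕ => if n % 2 = 1 then 2 / (n : ℝ) ^ w else 0)
      (eulerSum1 w 1 - eulerSum1 w (-1)) := by
  simpa only [one_pow_div_sub_neg_one_pow_div] using
    (hasSum_eulerSum1 hw (e := 1) (by simp)).sub (hasSum_eulerSum1 hw (e := -1) (by simp))

lemma tValue1_eq_eulerSum1_sub {w : ℕ} (hw : 2 ≤ w) :
    tValue1 w = eulerSum1 w 1 - eulerSum1 w (-1) :=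
  (tendsto_sum_Icc_one_of_hasSum (hasSum_eulerSum1_sub hw) (by simp)).limUnder_eq

lemma hasSum_tValue1 {w : ℕ} (hw : 2 ≤ w) :
    HasSum (fun j : ℕ => 2 / (2 * (j : ℝ) + 1) ^ w) (tValue1 w) := by
  have hinj : Function.Injective (fun j : ℕ => 2 * j + 1) := fun i j hij => by simpa using hij
  rw [tValue1_eq_eulerSum1_sub hw]
  refine ((hinj.hasSum_iff fun n hn => ?_).2 (hasSum_eulerSum1_sub hw)).congr_fun fun j => ?_
  · rw [range_two_mul_add_one, Set.mem_ofPred_eq, Nat.odd_iff] at hn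
    exact if_neg hn
  · simp [Nat.add_mod]

end SingleSums

section Terms

/-- The summand of `2 ^ (a - 1) T(a, b)` at `m₁ = 2 (i + j + 1)`, `m₂ = 2j + 1`, for
`q = (i, j)`. -/
noncomputable def doubleTTerm (a b : ℕ) (q : ℕ × ℕ) : ℝ :=
  2 / (((q.1 : ℝ) + q.2 + 1) ^ a * (2 * (q.2 : ℝ) + 1) ^ b)

/-- The partial fraction `2 / (nᵖ k (k - n))`, where `k = i + j + 1` and `n = 2j + 1` for
`q = (i, j)`. It is `0` on the diagonal `k = n`, since `1 / 0 = 0`. -/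
noncomputable def telescopingTerm (p : ℕ) (q : ℕ × ℕ) : ℝ :=
  2 / ((2 * (q.2 : ℝ) + 1) ^ p * (((q.1 : ℝ) + q.2 + 1) * ((q.1 : ℝ) - q.2)))

/-- The partial fraction `2 / (kᵖ (k - n))`, where `k = i + j + 1` and `n = 2j + 1` for
`q = (i, j)`. It is `0` on the diagonal `k = n`, since `1 / 0 = 0`. -/
noncomputable def skewTerm (p : ℕ) (q : ℕ × ℕ) : ℝ :=
  2 / (((q.1 : ℝ) + q.2 + 1) ^ p * ((q.1 : ℝ) - q.2))

lemma skewTerm_swap (p : ℕ) (q : ℕ × ℕ) : skewTerm p q.swap = -skewTerm p q := by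
  simp only [skewTerm, Prod.fst_swap, Prod.snd_swap]
  rw [← div_neg, ← mul_neg, neg_sub, add_comm (q.2 : ℝ)]

end Terms

section PartialFractions

lemma sum_Icc_pow_mul_pow {R : Type*} [CommSemiring R] (r s : R) (p : ℕ) :
    ∑ a ∈ Finset.Icc 2 (p + 1), r ^ a * s ^ (p + 2 - a)
      = r ^ 2 * s * ∑ i ∈ Finset.range p, r ^ i * s ^ (p - 1 - i) := by
  have hIcc : Finset.Icc 2 (p + 1) = Finset.Ico (0 + 2) (p + 2) := rfl
  rw [hIcc, ← Finset.sum_Ico_add', ← Finset.range_eq_Ico, Finset.mul_sum]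
  refine Finset.sum_congr rfl fun i hi => ?_
  have hip := Finset.mem_range.1 hi
  rw [show p + 2 - (i + 2) = p - 1 - i + 1 by omega]
  ring

lemma sum_Icc_one_div_pow_mul_pow_self {K : Type*} [Field K] (x : K) (p : ℕ) :
    ∑ a ∈ Finset.Icc 2 (p + 1), 1 / (x ^ a * x ^ (p + 2 - a)) = p / x ^ (p + 2) := by
  have hterm : ∀ a ∈ Finset.Icc 2 (p + 1), 1 / (x ^ a * x ^ (p + 2 - a)) = 1 / x ^ (p + 2) := by
    intro a ha
    have := Finset.mem_Icc.1 ha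
    rw [← pow_add, show a + (p + 2 - a) = p + 2 by omega]
  rw [Finset.sum_congr rfl hterm]
  simp [div_eq_mul_inv]

lemma sum_Icc_one_div_pow_mul_pow {K : Type*} [Field K] {x y : K} (hx : x ≠ 0) (hy : y ≠ 0)
    (hxy : x ≠ y) (p : ℕ) :
    ∑ a ∈ Finset.Icc 2 (p + 1), 1 / (x ^ a * y ^ (p + 2 - a))
      = 1 / (y ^ p * (x * (x - y))) - 1 / (x ^ (p + 1) * (x - y)) := by
  have hsub : x - y ≠ 0 := sub_ne_zero.2 hxy
  have hgeom : ∑ i ∈ Finset.range p, x⁻¹ ^ i * y⁻¹ ^ (p - 1 - i)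
      = (1 / y ^ p - 1 / x ^ p) * (x * y / (x - y)) := by
    rw [eq_div_of_mul_eq (sub_ne_zero.2 (inv_injective.ne hxy)) (geom_sum₂_mul x⁻¹ y⁻¹ p),
      inv_sub_inv hx hy, ← neg_sub x y, inv_pow, inv_pow, one_div, one_div]
    field_simp
    ring
  have hterm : ∀ a, 1 / (x ^ a * y ^ (p + 2 - a)) = x⁻¹ ^ a * y⁻¹ ^ (p + 2 - a) := fun a => by
    rw [one_div, mul_inv, inv_pow, inv_pow]
  simp only [hterm]
  rw [sum_Icc_pow_mul_pow, hgeom]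
  field_simp
  ring

lemma sum_doubleTTerm (p : ℕ) (q : ℕ × ℕ) :
    ∑ a ∈ Finset.Icc 2 (p + 1), doubleTTerm a (p + 2 - a) q
      = (if q.1 = q.2 then p * (2 / (2 * (q.2 : ℝ) + 1) ^ (p + 2)) else 0)
        + telescopingTerm p q - skewTerm (p + 1) q := by
  obtain ⟨i, j⟩ := q
  have hk : (i : ℝ) + j + 1 ≠ 0 := by positivity
  have hn : 2 * (j : ℝ) + 1 ≠ 0 := by positivity
  have hkn : (i : ℝ) + j + 1 - (2 * j + 1) = i - j := by ring
  simp only [doubleTTerm, telescopingTerm, skewTerm, ← mul_one_div (2 : ℝ), ← Finset.mul_sum]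
  split_ifs with hij
  · rw [hij, ← two_mul, sum_Icc_one_div_pow_mul_pow_self]
    simp only [sub_self, mul_zero, div_zero]
    ring
  · have hne : (i : ℝ) + j + 1 ≠ 2 * j + 1 := by
      rw [← sub_ne_zero, hkn, sub_ne_zero]
      exact_mod_cast hij
    rw [sum_Icc_one_div_pow_mul_pow hk hn hne, hkn]
    ring

end PartialFractions

section Summability

lemma one_div_mul_mul_le_rpow {x y z : ℝ} (hx : 0 < x) (hy : 0 < y) (hxz : x ≤ z) (hyz : y ≤ z) :
    1 / (x * y * z) ≤ x ^ (-(3 / 2) : ℝ) * y ^ (-(3 / 2) : ℝ) := by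
  have hxy : 0 < x * y := mul_pos hx hy
  have hz : 0 < z := hx.trans_le hxz
  have hsqrt : √(x * y) ≤ z := Real.sqrt_le_iff.2 ⟨hz.le, by nlinarith⟩
  have hpow : (x * y) ^ (-(3 / 2) : ℝ) = 1 / (x * y * √(x * y)) := by
    rw [Real.rpow_neg hxy.le, show (3 / 2 : ℝ) = 1 + 1 / 2 by norm_num, Real.rpow_add hxy,
      Real.rpow_one, ← Real.sqrt_eq_rpow, one_div]
  rw [← Real.mul_rpow hx.le hy.le, hpow]
  gcongr

lemma summable_nat_add_one_rpow {r : ℝ} (hr : r < -1) :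
    Summable (fun n : ℕ => ((n : ℝ) + 1) ^ r) := by
  simpa using (summable_nat_add_iff 1).2 (Real.summable_nat_rpow.2 hr)

lemma summable_int_abs_add_one_rpow {r : ℝ} (hr : r < -1) :
    Summable (fun l : ℤ => (|(l : ℝ)| + 1) ^ r) :=
  .of_nat_of_neg (by simpa using summable_nat_add_one_rpow hr)
    (by simpa using summable_nat_add_one_rpow hr)

lemma summable_one_div_mul_abs_sub_mul :
    Summable (fun q : ℕ × ℕ =>
      1 / (((q.2 : ℝ) + 1) * (|(q.1 : ℝ) - q.2| + 1) * ((q.1 : ℝ) + q.2 + 1))) := by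
  have hprod : Summable (fun r : ℕ × ℤ =>
      ((r.1 : ℝ) + 1) ^ (-(3 / 2) : ℝ) * (|(r.2 : ℝ)| + 1) ^ (-(3 / 2) : ℝ)) :=
    (summable_nat_add_one_rpow (by norm_num)).mul_of_nonneg
      (summable_int_abs_add_one_rpow (by norm_num)) (fun _ => by positivity)
      (fun _ => by positivity)
  have hinj : Function.Injective (fun q : ℕ × ℕ => (q.2, (q.1 : ℤ) - q.2)) := by
    rintro ⟨i, j⟩ ⟨i', j'⟩ h
    simp only [Prod.mk.injEq] at h ⊢
    omega
  refine Summable.of_nonneg_of_le (fun _ => by positivity) ?_ (hprod.comp_injective hinj)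
  rintro ⟨i, j⟩
  have habs : |(i : ℝ) - j| ≤ i + j := (abs_sub _ _).trans_eq (by simp)
  simpa using one_div_mul_mul_le_rpow (x := (j : ℝ) + 1) (y := |(i : ℝ) - j| + 1)
    (z := (i : ℝ) + j + 1) (by positivity) (by positivity)
    (by linarith [i.cast_nonneg (α := ℝ)]) (by linarith)

lemma summable_doubleTTerm {a b : ℕ} (ha : 2 ≤ a) (hb : 1 ≤ b) : Summable (doubleTTerm a b) := by
  refine Summable.of_nonneg_of_le (fun q => by unfold doubleTTerm; positivity) ?_
    (summable_one_div_mul_abs_sub_mul.mul_left 2)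
  rintro ⟨i, j⟩
  have habs : |(i : ℝ) - j| ≤ i + j := (abs_sub _ _).trans_eq (by simp)
  rw [mul_one_div]
  refine div_le_div_of_nonneg_left two_pos.le (by positivity) ?_
  calc ((j : ℝ) + 1) * (|(i : ℝ) - j| + 1) * ((i : ℝ) + j + 1)
      ≤ (2 * (j : ℝ) + 1) * ((i : ℝ) + j + 1) * ((i : ℝ) + j + 1) := by
        gcongr
        linarith [j.cast_nonneg (α := ℝ)]
    _ = ((i : ℝ) + j + 1) ^ 2 * (2 * (j : ℝ) + 1) ^ 1 := by ring
    _ ≤ ((i : ℝ) + j + 1) ^ a * (2 * (j : ℝ) + 1) ^ b := by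
        gcongr <;> linarith [i.cast_nonneg (α := ℝ), j.cast_nonneg (α := ℝ)]

lemma summable_telescopingTerm {p : ℕ} (hp : 1 ≤ p) : Summable (telescopingTerm p) := by
  refine Summable.of_norm_bounded (summable_one_div_mul_abs_sub_mul.mul_left 4) ?_
  rintro ⟨i, j⟩
  rcases eq_or_ne i j with rfl | hij
  · simp only [telescopingTerm, sub_self, mul_zero, div_zero, norm_zero]
    positivity
  have habs : 1 ≤ |(i : ℝ) - j| := by
    exact_mod_cast Int.one_le_abs (sub_ne_zero.2 (Nat.cast_injective.ne hij))
  have hnorm : ‖telescopingTerm p (i, j)‖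
      = 4 / (2 * ((2 * (j : ℝ) + 1) ^ p * (((i : ℝ) + j + 1) * |(i : ℝ) - j|))) := by
    rw [telescopingTerm, norm_div, norm_mul, norm_mul, norm_pow, Real.norm_eq_abs,
      Real.norm_eq_abs, Real.norm_eq_abs, Real.norm_eq_abs, abs_two,
      abs_of_nonneg (by positivity : 0 ≤ 2 * (j : ℝ) + 1),
      abs_of_nonneg (by positivity : 0 ≤ (i : ℝ) + j + 1)]
    field_simp
    norm_num
  rw [hnorm, mul_one_div]
  refine div_le_div_of_nonneg_left (by norm_num) (by positivity) ?_
  calc ((j : ℝ) + 1) * (|(i : ℝ) - j| + 1) * ((i : ℝ) + j + 1)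
      ≤ (2 * (j : ℝ) + 1) ^ 1 * (2 * |(i : ℝ) - j|) * ((i : ℝ) + j + 1) := by
        gcongr <;> linarith [j.cast_nonneg (α := ℝ)]
    _ ≤ (2 * (j : ℝ) + 1) ^ p * (2 * |(i : ℝ) - j|) * ((i : ℝ) + j + 1) := by
        gcongr
        linarith [j.cast_nonneg (α := ℝ)]
    _ = 2 * ((2 * (j : ℝ) + 1) ^ p * (((i : ℝ) + j + 1) * |(i : ℝ) - j|)) := by ring

end Summability

section DoubleSums

lemma hasSum_doubleTTerm {a b : ℕ} (ha : 2 ≤ a) (hb : 1 ≤ b) :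
    HasSum (doubleTTerm a b) (2 ^ (a - 1) * tValue2 a b) := by
  have hterm : ∀ q : ℕ × ℕ, 4 / (((2 * (q.1 + q.2 + 1) : ℕ) : ℝ) ^ a * ((2 * q.2 + 1 : ℕ) : ℝ) ^ b)
      = (2 ^ (a - 1))⁻¹ * doubleTTerm a b q := by
    intro q
    rw [doubleTTerm]
    push_cast
    rw [mul_pow, ← pow_sub_one_mul (show a ≠ 0 by omega) (2 : ℝ)]
    field_simp
    norm_num
  have hs := (summable_doubleTTerm ha hb).hasSum
  have hT : tValue2 a b = (2 ^ (a - 1))⁻¹ * ∑' q, doubleTTerm a b q :=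
    (tendsto_sum_Icc_sum_Ico_even_odd (f := fun m n => 4 / ((m : ℝ) ^ a * (n : ℝ) ^ b))
      (by simpa only [hterm] using hs.mul_left _)).limUnder_eq
  rwa [hT, mul_inv_cancel_left₀ (by positivity)]

lemma sum_range_one_div_sub_center (j : ℕ) :
    ∑ i ∈ Finset.range (2 * j + 1), 1 / ((i : ℝ) - j) = 0 := by
  rw [← self_eq_neg, ← Finset.sum_neg_distrib, ← Finset.sum_range_reflect]
  refine Finset.sum_congr rfl fun i hi => ?_
  have hij := Finset.mem_range.1 hi
  rw [Nat.add_sub_cancel, Nat.cast_sub (by omega), ← one_div_neg_eq_neg_one_div]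
  push_cast
  ring_nf

lemma tendsto_sum_range_one_div_mul_sub (j : ℕ) :
    Tendsto (fun N : ℕ => ∑ i ∈ Finset.range N, 1 / (((i : ℝ) + j + 1) * ((i : ℝ) - j))) atTop
      (𝓝 (1 / (2 * (j : ℝ) + 1) ^ 2)) := by
  have hn : 2 * (j : ℝ) + 1 ≠ 0 := by positivity
  -- At `i = j` both the left side and `1 / (i - j)` are `1 / 0 = 0`.
  have hsplit : ∀ i : ℕ, 1 / (((i : ℝ) + j + 1) * ((i : ℝ) - j))
      = 1 / (2 * (j : ℝ) + 1) * (1 / ((i : ℝ) - j) - 1 / (((i + (2 * j + 1) : ℕ) : ℝ) - j))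
        + if i = j then 1 / (2 * (j : ℝ) + 1) ^ 2 else 0 := by
    intro i
    have hk : (i : ℝ) + j + 1 ≠ 0 := by positivity
    have hshift : ((i + (2 * j + 1) : ℕ) : ℝ) - j = i + j + 1 := by push_cast; ring
    rw [hshift]
    split_ifs with hij
    · rw [hij, sub_self, mul_zero, div_zero, ← two_mul]
      field_simp
      ring
    · have hsub : (i : ℝ) - j ≠ 0 := sub_ne_zero.2 (Nat.cast_injective.ne hij)
      field_simp
      ring
  have hzero : Tendsto (fun i : ℕ => 1 / ((i : ℝ) - j)) atTop (𝓝 0) :=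
    (tendsto_atTop_add_const_right _ (-(j : ℝ)) tendsto_natCast_atTop_atTop).const_div_atTop 1
  have htelescope := tendsto_sum_range_sub_shift hzero (2 * j + 1)
  rw [sum_range_one_div_sub_center, smul_zero, sub_zero] at htelescope
  have hpole := (hasSum_ite_eq j (1 / (2 * (j : ℝ) + 1) ^ 2)).tendsto_sum_nat
  simp only [hsplit, Finset.sum_add_distrib, ← Finset.mul_sum]
  simpa using (htelescope.const_mul (1 / (2 * (j : ℝ) + 1))).add hpole

lemma hasSum_telescopingTerm_fst {p : ℕ} (hp : 1 ≤ p) (j : ℕ) :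
    HasSum (fun i : ℕ => telescopingTerm p (i, j)) (2 / (2 * (j : ℝ) + 1) ^ (p + 2)) := by
  have hs : Summable (fun i : ℕ => telescopingTerm p (i, j)) :=
    (summable_telescopingTerm hp).prod_symm.prod_factor j
  have hlim := (tendsto_sum_range_one_div_mul_sub j).const_mul (2 / (2 * (j : ℝ) + 1) ^ p)
  simp only [Finset.mul_sum, div_mul_div_comm, mul_one, ← pow_add] at hlim
  exact hs.hasSum_iff_tendsto_nat.2 hlim

lemma hasSum_telescopingTerm {p : ℕ} (hp : 1 ≤ p) :
    HasSum (telescopingTerm p) (tValue1 (p + 2)) := by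
  have hs := summable_telescopingTerm hp
  have hT := hs.prod_symm.hasSum.prod_fiberwise (hasSum_telescopingTerm_fst hp)
  rw [(hasSum_tValue1 (by omega)).unique hT]
  exact (Equiv.prodComm ℕ ℕ).hasSum_iff.1 hs.prod_symm.hasSum

lemma hasSum_sum_doubleTTerm {p : ℕ} (hp : 1 ≤ p) :
    HasSum (fun q => ∑ a ∈ Finset.Icc 2 (p + 1), doubleTTerm a (p + 2 - a) q)
      ((p + 1) * tValue1 (p + 2)) := by
  have hdouble : Summable fun q => ∑ a ∈ Finset.Icc 2 (p + 1), doubleTTerm a (p + 2 - a) q := by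
    refine summable_sum fun a ha => ?_
    have := Finset.mem_Icc.1 ha
    exact summable_doubleTTerm this.1 (by omega)
  have hdiag := hasSum_ite_fst_eq_snd ((hasSum_tValue1 (w := p + 2) (by omega)).mul_left (p : ℝ))
  have hmain := hdiag.add (hasSum_telescopingTerm hp)
  have hskew : HasSum (skewTerm (p + 1)) 0 := by
    have hs : Summable (skewTerm (p + 1)) :=
      (hmain.summable.sub hdouble).congr fun q => by rw [sum_doubleTTerm]; ring
    rw [← tsum_eq_zero_of_comp_equiv_eq_neg (Equiv.prodComm ℕ ℕ) (skewTerm_swap (p + 1))]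
    exact hs.hasSum
  simpa only [sum_doubleTTerm, sub_zero, add_one_mul] using hmain.sub hskew

end DoubleSums

/-- Weighted sum formula for double T-values: for `w ≥ 3`,
`∑_{a+b=w, a≥2} 2^{a−1} T(a,b) = (w−1)(ζ(w) − ζ(w̄)) = (w−1) T(w)`. -/
theorem weighted_sum_double_T (w : ℕ) (hw : 3 ≤ w) :
    ∑ a ∈ Finset.Icc 2 (w - 1), (2 : ℝ) ^ (a - 1) * tValue2 a (w - a)
        = ((w : ℝ) - 1) * (eulerSum1 w 1 - eulerSum1 w (-1))
    ∧ ∑ a ∈ Finset.Icc 2 (w - 1), (2 : ℝ) ^ (a - 1) * tValue2 a (w - a)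
        = ((w : ℝ) - 1) * tValue1 w := by
  rw [← tValue1_eq_eulerSum1_sub (by omega), and_self]
  obtain ⟨p, rfl⟩ : ∃ p, w = p + 2 := ⟨w - 2, by omega⟩
  have hweighted : HasSum (fun q => ∑ a ∈ Finset.Icc 2 (p + 1), doubleTTerm a (p + 2 - a) q)
      (∑ a ∈ Finset.Icc 2 (p + 1), (2 : ℝ) ^ (a - 1) * tValue2 a (p + 2 - a)) := by
    refine hasSum_sum fun a ha => ?_
    have := Finset.mem_Icc.1 ha
    exact hasSum_doubleTTerm this.1 (by omega)
  rw [show p + 2 - 1 = p + 1 by omega, hweighted.unique (hasSum_sum_doubleTTerm (by omega))]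
  push_cast
  ring
end
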